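/- Let u be defined by u(t, x) = F_p(t, Δ(t, x)) for x > 0 and u(t, x) = −F_p(t, Δ(t, −x)) for x < 0. Then for every t ∈ (0, π/(2√2)) the one-sided spatial limits of u(t, ·) at 0 exist and satisfy lim_{x → 0⁺} u(t, x) = lim_{x → 0⁻} u(t, x) = 0, while for every t > π/(2√2) they satisfy lim_{x → 0⁺} u(t, x) = −𝒯⁻¹(2t) < 0 and lim_{x → 0⁻} u(t, x) = 𝒯⁻¹(2t) > 0, where 𝒯⁻¹ is the inverse of the increasing period map 𝒯; in particular, for t > π/(2√2), u(t, ·) has an entropic stationary shock at x = 0 (left limit greater than right limit) whose size 2 𝒯⁻¹(2t) is increasing in t. -/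

import Mathlib

open Real Set Filter MeasureTheory
open scoped Topology

/-- The potential `g` from the Hamiltonian `H(x,p) = p²/2 + g(x)`. -/
noncomputable def g (x : ℝ) : ℝ := if |x| ≤ 1 then 1 - (1 - x ^ 2) ^ 4 else 1

/-- The derivative of `g`. -/
noncomputable def g' (x : ℝ) : ℝ := if |x| ≤ 1 then 8 * x * (1 - x ^ 2) ^ 3 else 0

/-- `(q, p)` is a (global) solution of the Hamiltonian system (HS): `q̇ = p`, `ṗ = -g'(q)`. -/
def IsHSSol (q p : ℝ → ℝ) : Prop :=
  (∀ t : ℝ, HasDerivAt q (p t) t) ∧ (∀ t : ℝ, HasDerivAt p (-(g' (q t))) t)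

/-- `F` is the flow of (HS): `F t q₀ p₀ = (q t, p t)` for the solution with data `(q₀, p₀)`. -/
def IsHSFlow (F : ℝ → ℝ → ℝ → ℝ × ℝ) : Prop :=
  ∀ q₀ p₀ : ℝ,
    IsHSSol (fun t => (F t q₀ p₀).1) (fun t => (F t q₀ p₀).2) ∧ F 0 q₀ p₀ = (q₀, p₀)

/-- The set `([0,∞) × {2}) ∪ ({0} × (0,2])`, codomain of the map `Δ`. -/
def Dset : Set (ℝ × ℝ) := (Ici (0:ℝ) ×ˢ ({2} : Set ℝ)) ∪ ({(0:ℝ)} ×ˢ Ioc (0:ℝ) 2)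

/-- `T` is the smallest positive period of `q`. -/
def IsSmallestPeriod (q : ℝ → ℝ) (T : ℝ) : Prop :=
  0 < T ∧ Function.Periodic q T ∧ ∀ T' : ℝ, 0 < T' → Function.Periodic q T' → T ≤ T'

/-- `T` is the period map `𝒯`, assigning to `p₀ ∈ (0, √2)` the smallest positive period of
the `q`-component of the solution of (HS) with initial datum `(0, p₀)`. -/
def IsPeriodMap (F : ℝ → ℝ → ℝ → ℝ × ℝ) (T : ℝ → ℝ) : Prop :=
  ∀ p₀ ∈ Ioo (0:ℝ) (Real.sqrt 2), IsSmallestPeriod (fun t => (F t 0 p₀).1) (T p₀)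

/-- `Δ` associates to `(t,x)` the datum in `Dset` whose orbit stays positive on `(0,t)`
and reaches `x` at time `t`. -/
def IsDeltaMap (F : ℝ → ℝ → ℝ → ℝ × ℝ) (Δ : ℝ → ℝ → ℝ × ℝ) : Prop :=
  ∀ t x : ℝ, 0 < t → 0 < x →
    Δ t x ∈ Dset ∧ (F t (Δ t x).1 (Δ t x).2).1 = x ∧
      ∀ s ∈ Ioo (0:ℝ) t, 0 < (F s (Δ t x).1 (Δ t x).2).1

/-- The solution `u` of the conservation law built from the flow `F` and the map `Δ`
(extended by `0` at `x = 0`). -/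
noncomputable def usol (F : ℝ → ℝ → ℝ → ℝ × ℝ) (Δ : ℝ → ℝ → ℝ × ℝ) (t x : ℝ) : ℝ :=
  if 0 < x then (F t (Δ t x).1 (Δ t x).2).2
  else if x < 0 then -(F t (Δ t (-x)).1 (Δ t (-x)).2).2
  else 0

/-!
The equation is Newton's equation in the even potential well `g`. For `0 < x < t` the datum
`Δ t x` cannot start with momentum `2`, since such orbits move at speed at least `1`; hence
`Δ t x = (0, c)`, and as `x → 0⁺` the momentum `c` accumulates only at momenta whose orbit
leaves `0`, stays nonnegative on `(0, t)` and is back at `0` at time `t`. Energy conservation and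
the symmetries of the equation show that such a nonzero momentum lies below the escape momentum
`√2` and has period `2t`. For `2t < π / √2` there is none, so `c → 0`, the rest point. For
`2t > π / √2` the only one is `𝒯⁻¹(2t)`; the rest point is excluded because an orbit of period
smaller than `2t` changes sign before time `t`. By symmetry the orbit returns to `0` with the
opposite momentum, which is the right limit of `u(t, ·)`; the left limit follows since `u(t, ·)`
is odd.
-/

section General

lemma eq_zero_of_odd_of_periodic_two_mul {α β : Type*} [Ring α] [AddGroup β]
    [IsAddTorsionFree β] {f : α → β} (hodd : f.Odd) {t : α} (hper : f.Periodic (2 * t)) :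
    f t = 0 := by
  have hreflect : f (-t) = f t := by
    simpa only [two_mul, neg_add_cancel_left] using (hper (-t)).symm
  exact neg_eq_self.mp ((hodd t).symm.trans hreflect)

lemma strictMonoOn_of_rightInvOn_of_mapsTo {α β : Type*} [LinearOrder α] [Preorder β]
    {f : α → β} {f' : β → α} {s : Set α} {t : Set β} (hf : StrictMonoOn f s)
    (hinv : RightInvOn f' f t) (hmaps : MapsTo f' t s) : StrictMonoOn f' t := by
  intro x hx y hy hxy
  rw [← hf.lt_iff_lt (hmaps hx) (hmaps hy), hinv hx, hinv hy]
  exact hxy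

lemma tendsto_nhdsLT_zero_of_odd {α β : Type*} [AddCommGroup α] [PartialOrder α]
    [IsOrderedAddMonoid α] [TopologicalSpace α] [ContinuousNeg α] [InvolutiveNeg β]
    [TopologicalSpace β] [ContinuousNeg β] {f : α → β} (hodd : f.Odd) {l : β}
    (hf : Tendsto f (𝓝[>] 0) (𝓝 l)) : Tendsto f (𝓝[<] 0) (𝓝 (-l)) := by
  have hneg : Tendsto (fun x : α => -x) (𝓝[<] 0) (𝓝[>] 0) := by
    simpa only [neg_zero] using tendsto_neg_nhdsLT (a := (0 : α))
  refine (hf.comp hneg).neg.congr fun x => ?_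
  rw [Function.comp_apply, hodd x, neg_neg]

lemma hasDerivAt_posPart_pow (n : ℕ) (y : ℝ) :
    HasDerivAt (fun y : ℝ => y⁺ ^ (n + 2)) ((n + 2) * y⁺ ^ (n + 1)) y := by
  have hcont (k : ℕ) : Continuous fun y : ℝ => y⁺ ^ k := continuous_posPart.pow k
  refine hasDerivAt_of_hasDerivAt_of_ne' (g := fun y : ℝ => (n + 2) * y⁺ ^ (n + 1)) (x := 0)
    (fun z hz => ?_) (hcont _).continuousAt ((hcont _).const_mul _).continuousAt y
  rcases hz.lt_or_gt with hz | hz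
  · have hlocal : (fun y : ℝ => y⁺ ^ (n + 2)) =ᶠ[𝓝 z] fun _ => 0 := by
      filter_upwards [Iio_mem_nhds hz] with w hw
      simp [posPart_eq_zero.mpr (mem_Iio.mp hw).le]
    simpa [posPart_eq_zero.mpr hz.le] using
      (hasDerivAt_const z (0 : ℝ)).congr_of_eventuallyEq hlocal
  · have hlocal : (fun y : ℝ => y⁺ ^ (n + 2)) =ᶠ[𝓝 z] fun y => y ^ (n + 2) := by
      filter_upwards [Ioi_mem_nhds hz] with w hw
      rw [posPart_eq_self.mpr (mem_Ioi.mp hw).le]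
    simpa [posPart_eq_self.mpr hz.le] using
      (hasDerivAt_pow (n + 2) z).congr_of_eventuallyEq hlocal

lemma contDiff_one_posPart_pow (n : ℕ) : ContDiff ℝ 1 fun y : ℝ => y⁺ ^ (n + 2) := by
  have hderiv : deriv (fun y : ℝ => y⁺ ^ (n + 2)) = fun y : ℝ => (n + 2) * y⁺ ^ (n + 1) :=
    funext fun y => (hasDerivAt_posPart_pow n y).deriv
  refine contDiff_one_iff_deriv.mpr
    ⟨fun y => (hasDerivAt_posPart_pow n y).differentiableAt, ?_⟩
  rw [hderiv]
  exact (continuous_posPart.pow _).const_mul _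

end General

/-! ### Newton's equation -/

section NewtonPhaseSpace

variable {E : Type*} [NormedAddCommGroup E]

/-- The vector field on phase space whose integral curves are the solutions of Newton's
equation `q̇ = p`, `ṗ = -V'(q)`. -/
def newtonField (V' : E → E) (z : E × E) : E × E := (z.2, -(V' z.1))

lemma lipschitzWith_newtonField {V' : E → E} {K : NNReal} (hV' : LipschitzWith K V') :
    LipschitzWith (max 1 K) (newtonField V') := by
  have hforce : LipschitzWith K fun z : E × E => -(V' z.1) :=
    (hV'.comp LipschitzWith.prod_fst).neg.weaken (mul_one K).le
  exact LipschitzWith.prod_snd.prodMk hforce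

variable [NormedSpace ℝ E]

/-- `(q, p)` is a global solution of Newton's equation `q̇ = p`, `ṗ = -V'(q)`, where `V'` is
meant to be the gradient of a potential. For `V' = g'` this is `IsHSSol`. -/
structure IsNewtonSol (V' : E → E) (q p : ℝ → E) : Prop where
  hasDerivAt_position (t : ℝ) : HasDerivAt q (p t) t
  hasDerivAt_momentum (t : ℝ) : HasDerivAt p (-(V' (q t))) t

namespace IsNewtonSol

variable {V' : E → E} {q p q₁ p₁ : ℝ → E} {K : NNReal}

lemma hasDerivAt_prodMk (h : IsNewtonSol V' q p) (t : ℝ) :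
    HasDerivAt (fun t => (q t, p t)) (newtonField V' (q t, p t)) t :=
  (h.hasDerivAt_position t).prodMk (h.hasDerivAt_momentum t)

lemma comp_add_const (h : IsNewtonSol V' q p) (a : ℝ) :
    IsNewtonSol V' (fun t => q (t + a)) (fun t => p (t + a)) :=
  ⟨fun t => (h.hasDerivAt_position (t + a)).comp_add_const t a,
    fun t => (h.hasDerivAt_momentum (t + a)).comp_add_const t a⟩

lemma time_reversal (h : IsNewtonSol V' q p) :
    IsNewtonSol V' (fun t => q (-t)) (fun t => -p (-t)) where
  hasDerivAt_position t :=
    ((h.hasDerivAt_position (-t)).scomp t (hasDerivAt_neg t)).congr_deriv (by simp)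
  hasDerivAt_momentum t :=
    ((h.hasDerivAt_momentum (-t)).scomp t (hasDerivAt_neg t)).neg.congr_deriv (by simp)

lemma neg (h : IsNewtonSol V' q p) (hodd : V'.Odd) :
    IsNewtonSol V' (fun t => -q t) (fun t => -p t) where
  hasDerivAt_position t := (h.hasDerivAt_position t).neg
  hasDerivAt_momentum t := by
    rw [hodd]
    exact (h.hasDerivAt_momentum t).neg

lemma const {a : E} (ha : V' a = 0) : IsNewtonSol V' (fun _ => a) (fun _ => 0) where
  hasDerivAt_position t := hasDerivAt_const t a
  hasDerivAt_momentum t := by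
    simpa only [ha, neg_zero] using hasDerivAt_const t (0 : E)

lemma eq_of_eq_at (h : IsNewtonSol V' q p) (h₁ : IsNewtonSol V' q₁ p₁)
    (hV' : LipschitzWith K V') {s : ℝ} (hq : q s = q₁ s) (hp : p s = p₁ s) :
    q = q₁ ∧ p = p₁ := by
  have hphase : (fun t => (q t, p t)) = fun t => (q₁ t, p₁ t) :=
    ODE_solution_unique_univ (v := fun _ => newtonField V') (s := fun _ => univ) (t₀ := s)
      (fun _ => (lipschitzWith_newtonField hV').lipschitzOnWith)
      (fun t => ⟨h.hasDerivAt_prodMk t, mem_univ _⟩)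
      (fun t => ⟨h₁.hasDerivAt_prodMk t, mem_univ _⟩) (Prod.ext hq hp)
  exact ⟨funext fun t => congrArg Prod.fst (congrFun hphase t),
    funext fun t => congrArg Prod.snd (congrFun hphase t)⟩

lemma dist_le_of_nonneg (h : IsNewtonSol V' q p) (h₁ : IsNewtonSol V' q₁ p₁)
    (hV' : LipschitzWith K V') {t : ℝ} (ht : 0 ≤ t) :
    dist (q t, p t) (q₁ t, p₁ t) ≤
      dist (q 0, p 0) (q₁ 0, p₁ 0) * exp ((max 1 K : NNReal) * t) := by
  simpa only [sub_zero] using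
    dist_le_of_trajectories_ODE (v := fun _ => newtonField V')
      (f := fun t => (q t, p t)) (g := fun t => (q₁ t, p₁ t))
      (fun _ => lipschitzWith_newtonField hV')
      (fun s _ => (h.hasDerivAt_prodMk s).continuousAt.continuousWithinAt)
      (fun s _ => (h.hasDerivAt_prodMk s).hasDerivWithinAt)
      (fun s _ => (h₁.hasDerivAt_prodMk s).continuousAt.continuousWithinAt)
      (fun s _ => (h₁.hasDerivAt_prodMk s).hasDerivWithinAt) le_rfl t ⟨ht, le_rfl⟩

lemma dist_le (h : IsNewtonSol V' q p) (h₁ : IsNewtonSol V' q₁ p₁)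
    (hV' : LipschitzWith K V') (t : ℝ) :
    dist (q t, p t) (q₁ t, p₁ t) ≤
      dist (q 0, p 0) (q₁ 0, p₁ 0) * exp ((max 1 K : NNReal) * |t|) := by
  rcases le_total 0 t with ht | ht
  · simpa only [abs_of_nonneg ht] using h.dist_le_of_nonneg h₁ hV' ht
  · simpa only [abs_of_nonpos ht, neg_neg, neg_zero, Prod.dist_eq, dist_neg_neg] using
      h.time_reversal.dist_le_of_nonneg h₁.time_reversal hV' (neg_nonneg.mpr ht)

lemma odd_position (h : IsNewtonSol V' q p) (hV' : LipschitzWith K V') (hodd : V'.Odd)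
    (h0 : q 0 = 0) : q.Odd := by
  have hreflect := h.time_reversal.neg hodd
  obtain ⟨hq, -⟩ := h.eq_of_eq_at hreflect hV' (s := 0) (by simp [h0]) (by simp)
  exact fun t => by rw [congrFun hq t, neg_neg]

lemma periodic_position (h : IsNewtonSol V' q p) (hV' : LipschitzWith K V') {t : ℝ}
    (hq : q t = q 0) (hp : p t = p 0) : q.Periodic t :=
  congrFun ((h.comp_add_const t).eq_of_eq_at h hV' (s := 0) (by simpa using hq)
    (by simpa using hp)).1

lemma antiperiodic_position (h : IsNewtonSol V' q p) (hV' : LipschitzWith K V')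
    (hodd : V'.Odd) {t : ℝ} (hq : q t = -q 0) (hp : p t = -p 0) : q.Antiperiodic t :=
  congrFun ((h.comp_add_const t).eq_of_eq_at (h.neg hodd) hV' (s := 0) (by simpa using hq)
    (by simpa using hp)).1

end IsNewtonSol

end NewtonPhaseSpace

section NewtonLine

namespace IsNewtonSol

variable {V V' q p : ℝ → ℝ} {K : NNReal}

lemma energy_eq (h : IsNewtonSol V' q p) (hV : ∀ x, HasDerivAt V (V' x) x) (s t : ℝ) :
    p s ^ 2 / 2 + V (q s) = p t ^ 2 / 2 + V (q t) := by
  have hderiv (t : ℝ) : HasDerivAt (fun t => p t ^ 2 / 2 + V (q t)) 0 t := by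
    refine ((((h.hasDerivAt_momentum t).pow 2).div_const 2).add
      ((hV (q t)).comp t (h.hasDerivAt_position t))).congr_deriv ?_
    push_cast
    ring
  exact is_const_of_deriv_eq_zero (fun t => (hderiv t).differentiableAt)
    (fun t => (hderiv t).deriv) s t

lemma momentum_sq_eq (h : IsNewtonSol V' q p) (hV : ∀ x, HasDerivAt V (V' x) x) {s t : ℝ}
    (hq : q s = q t) : p s ^ 2 = p t ^ 2 := by
  have henergy := h.energy_eq hV s t
  rw [hq] at henergy
  linarith

lemma momentum_ne_zero (h : IsNewtonSol V' q p) (hV' : LipschitzWith K V')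
    (hV : ∀ x, HasDerivAt V (V' x) x) {s : ℝ} (hp : p s ≠ 0)
    (hcrit : ∀ x, V x = p s ^ 2 / 2 + V (q s) → V' x = 0) (t : ℝ) : p t ≠ 0 := by
  intro hpt
  have hrest : V' (q t) = 0 := hcrit _ (by simp [h.energy_eq hV s t, hpt])
  obtain ⟨-, hpconst⟩ := h.eq_of_eq_at (const hrest) hV' (s := t) rfl hpt
  exact hp (congrFun hpconst s)

lemma injective_position (h : IsNewtonSol V' q p) (hp : ∀ t, p t ≠ 0) : q.Injective := by
  refine Function.Injective.of_lt_imp_ne fun a b hab hq => ?_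
  obtain ⟨c, -, hc⟩ := exists_hasDerivAt_eq_zero hab
    (fun s _ => (h.hasDerivAt_position s).continuousAt.continuousWithinAt) hq
    (fun s _ => h.hasDerivAt_position s)
  exact hp c hc

lemma le_momentum (h : IsNewtonSol V' q p) (hV : ∀ x, HasDerivAt V (V' x) x) {c s : ℝ}
    (hc : 0 < c) (hp : 0 < p s) (hE : ∀ x, c ^ 2 / 2 + V x ≤ p s ^ 2 / 2 + V (q s)) (t : ℝ) :
    c ≤ p t := by
  have hsq (t : ℝ) : c ^ 2 ≤ p t ^ 2 := by
    linarith [h.energy_eq hV s t, hE (q t)]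
  have hcont : Continuous p :=
    continuous_iff_continuousAt.mpr fun t => (h.hasDerivAt_momentum t).continuousAt
  have hpos : 0 < p t := by
    by_contra! hle
    obtain ⟨r, hr⟩ := mem_range_of_exists_le_of_exists_ge hcont ⟨t, hle⟩ ⟨s, hp.le⟩
    nlinarith [hsq r, pow_pos hc 2]
  exact (pow_le_pow_iff_left₀ hc.le hpos.le two_ne_zero).mp (hsq t)

lemma mul_sub_le_position_sub (h : IsNewtonSol V' q p) {c : ℝ} (hp : ∀ t, c ≤ p t) {s t : ℝ}
    (hst : s ≤ t) : c * (t - s) ≤ q t - q s :=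
  mul_sub_le_image_sub_of_le_deriv (fun t => (h.hasDerivAt_position t).differentiableAt)
    (fun t => (h.hasDerivAt_position t).deriv ▸ hp t) hst

lemma two_mul_le_of_periodic_of_nonneg (h : IsNewtonSol V' q p) (hV' : LipschitzWith K V')
    (hV : ∀ x, HasDerivAt V (V' x) x) (hodd : V'.Odd) (h0 : q 0 = 0) (hp : p 0 ≠ 0) {t T : ℝ}
    (hT : 0 < T) (hper : q.Periodic T) (hnonneg : ∀ s ∈ Ioo 0 t, 0 ≤ q s) : 2 * t ≤ T := by
  by_contra! hlt
  have hq : q (T / 2) = 0 := by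
    refine eq_zero_of_odd_of_periodic_two_mul (h.odd_position hV' hodd h0) ?_
    rwa [mul_div_cancel₀ T two_ne_zero]
  -- A nonnegative `q` touching `0` inside `(0, t)` has a minimum there, so its momentum vanishes.
  have hmin : IsLocalMin q (T / 2) := by
    filter_upwards [Ioo_mem_nhds (half_pos hT) (by linarith : T / 2 < t)] with s hs
    exact hq.trans_le (hnonneg s hs)
  have hpT : p (T / 2) = 0 := hmin.hasDerivAt_eq_zero (h.hasDerivAt_position _)
  have hsq := h.momentum_sq_eq hV (h0.trans hq.symm)
  rw [hpT, zero_pow two_ne_zero] at hsq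
  exact hp (pow_eq_zero_iff two_ne_zero |>.mp hsq)

lemma momentum_eq_neg_of_position_eq_zero (h : IsNewtonSol V' q p) (hV' : LipschitzWith K V')
    (hV : ∀ x, HasDerivAt V (V' x) x) (h0 : q 0 = 0) {t T : ℝ} (ht : 0 < t)
    (hT : IsSmallestPeriod q T) (htT : 2 * t ≤ T) (hqt : q t = 0) : p t = -p 0 := by
  refine (sq_eq_sq_iff_eq_or_eq_neg.mp (h.momentum_sq_eq hV (hqt.trans h0.symm))).resolve_left ?_
  intro hpt
  have hTt : T ≤ t := hT.2.2 t ht (h.periodic_position hV' (hqt.trans h0.symm) hpt)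
  linarith

lemma momentum_half_period (h : IsNewtonSol V' q p) (hV' : LipschitzWith K V')
    (hV : ∀ x, HasDerivAt V (V' x) x) (hodd : V'.Odd) (h0 : q 0 = 0) {t : ℝ}
    (hT : IsSmallestPeriod q (2 * t)) : p t = -p 0 :=
  h.momentum_eq_neg_of_position_eq_zero hV' hV h0 (by linarith [hT.1]) hT le_rfl
    (eq_zero_of_odd_of_periodic_two_mul (h.odd_position hV' hodd h0) hT.2.1)

lemma period_eq_two_mul (h : IsNewtonSol V' q p) (hV' : LipschitzWith K V')
    (hV : ∀ x, HasDerivAt V (V' x) x) (hodd : V'.Odd) (h0 : q 0 = 0) (hp : p 0 ≠ 0) {t T : ℝ}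
    (ht : 0 < t) (hT : IsSmallestPeriod q T) (hqt : q t = 0)
    (hnonneg : ∀ s ∈ Ioo 0 t, 0 ≤ q s) : T = 2 * t := by
  have hle : 2 * t ≤ T :=
    h.two_mul_le_of_periodic_of_nonneg hV' hV hodd h0 hp hT.1 hT.2.1 hnonneg
  have hpt : p t = -p 0 := h.momentum_eq_neg_of_position_eq_zero hV' hV h0 ht hT hle hqt
  have hanti : q.Antiperiodic t := h.antiperiodic_position hV' hodd (by simp [h0, hqt]) hpt
  exact le_antisymm (hT.2.2 _ (by linarith) hanti.periodic_two_mul) hle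

end IsNewtonSol

end NewtonLine

/-! ### The potential `g` -/

section Potential

lemma g_eq_one_sub_posPart_pow (x : ℝ) : g x = 1 - (1 - x ^ 2)⁺ ^ 4 := by
  unfold g
  split_ifs with hx <;> rw [← sq_le_one_iff_abs_le_one] at hx
  · rw [posPart_eq_self.mpr (by linarith)]
  · simp [posPart_eq_zero.mpr (by linarith : 1 - x ^ 2 ≤ 0)]

lemma g'_eq_mul_posPart_pow (x : ℝ) : g' x = 8 * x * (1 - x ^ 2)⁺ ^ 3 := by
  unfold g'
  split_ifs with hx <;> rw [← sq_le_one_iff_abs_le_one] at hx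
  · rw [posPart_eq_self.mpr (by linarith)]
  · simp [posPart_eq_zero.mpr (by linarith : 1 - x ^ 2 ≤ 0)]

lemma hasDerivAt_g (x : ℝ) : HasDerivAt g (g' x) x := by
  have hinner : HasDerivAt (fun x : ℝ => 1 - x ^ 2) (-(2 * x)) x := by
    simpa using (hasDerivAt_pow 2 x).const_sub 1
  rw [funext g_eq_one_sub_posPart_pow, g'_eq_mul_posPart_pow]
  refine (((hasDerivAt_posPart_pow 2 _).comp x hinner).const_sub 1).congr_deriv ?_
  push_cast
  ring

lemma g_zero : g 0 = 0 := by simp [g]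

lemma g_le_one (x : ℝ) : g x ≤ 1 := by
  rw [g_eq_one_sub_posPart_pow, sub_le_self_iff]
  exact pow_nonneg (posPart_nonneg _) 4

lemma g_nonneg (x : ℝ) : 0 ≤ g x := by
  have hle : (1 - x ^ 2)⁺ ≤ 1 :=
    sup_le (sub_le_self 1 (sq_nonneg x)) zero_le_one
  rw [g_eq_one_sub_posPart_pow, sub_nonneg]
  exact pow_le_one₀ (posPart_nonneg _) hle

lemma g'_eq_zero_of_one_le_g {x : ℝ} (hx : 1 ≤ g x) : g' x = 0 := by
  rw [g_eq_one_sub_posPart_pow, le_sub_self_iff] at hx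
  have hzero : (1 - x ^ 2)⁺ = 0 :=
    pow_eq_zero_iff four_ne_zero |>.mp (hx.antisymm (pow_nonneg (posPart_nonneg _) 4))
  simp [g'_eq_mul_posPart_pow, hzero]

lemma odd_g' : Function.Odd g' := fun x => by
  rw [g'_eq_mul_posPart_pow, g'_eq_mul_posPart_pow, neg_sq]
  ring

lemma hasCompactSupport_g' : HasCompactSupport g' := by
  refine HasCompactSupport.intro (isCompact_Icc (a := -1) (b := 1)) fun x hx => ?_
  exact if_neg fun habs => hx (abs_le.mp habs)

lemma contDiff_one_g' : ContDiff ℝ 1 g' := by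
  have hbump : ContDiff ℝ 1 fun x : ℝ => (1 - x ^ 2)⁺ ^ 3 :=
    (contDiff_one_posPart_pow 1).comp (contDiff_const.sub (contDiff_id.pow 2))
  rw [funext g'_eq_mul_posPart_pow]
  exact (contDiff_const.mul contDiff_id).mul hbump

lemma exists_lipschitzWith_g' : ∃ K, LipschitzWith K g' :=
  contDiff_one_g'.lipschitzWith_of_hasCompactSupport hasCompactSupport_g' one_ne_zero

end Potential

/-! ### The Hamiltonian flow -/

/-- `c` is a momentum at time `t` for which the orbit from `(0, c)` is back at position `0`
without having been negative in between. The weak inequality makes this a closed condition on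
`c`, satisfied by the limits of `(Δ t x).2` as `x → 0⁺`; the rest point `c = 0` is included. -/
def IsReturnMomentum (F : ℝ → ℝ → ℝ → ℝ × ℝ) (t c : ℝ) : Prop :=
  (F t 0 c).1 = 0 ∧ ∀ s ∈ Ioo 0 t, 0 ≤ (F s 0 c).1

section Flow

variable {F : ℝ → ℝ → ℝ → ℝ × ℝ} {T : ℝ → ℝ} {c t : ℝ}

namespace IsHSFlow

lemma isNewtonSol (hF : IsHSFlow F) (q₀ p₀ : ℝ) :
    IsNewtonSol g' (fun t => (F t q₀ p₀).1) (fun t => (F t q₀ p₀).2) :=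
  ⟨(hF q₀ p₀).1.1, (hF q₀ p₀).1.2⟩

lemma apply_zero (hF : IsHSFlow F) (q₀ p₀ : ℝ) : F 0 q₀ p₀ = (q₀, p₀) :=
  (hF q₀ p₀).2

lemma continuous_apply (hF : IsHSFlow F) (t : ℝ) :
    Continuous fun z : ℝ × ℝ => F t z.1 z.2 := by
  obtain ⟨K, hK⟩ := exists_lipschitzWith_g'
  refine LipschitzWith.continuous (K := (exp ((max 1 K : NNReal) * |t|)).toNNReal) <|
    LipschitzWith.of_dist_le_mul fun z w => ?_
  rw [Real.coe_toNNReal _ (exp_nonneg _), mul_comm]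
  simpa only [hF.apply_zero, Prod.mk.eta] using
    (hF.isNewtonSol z.1 z.2).dist_le (hF.isNewtonSol w.1 w.2) hK t

lemma continuous_apply_zero_left (hF : IsHSFlow F) (t : ℝ) : Continuous fun c => F t 0 c :=
  (hF.continuous_apply t).comp (Continuous.prodMk_right 0)

lemma apply_zero_zero (hF : IsHSFlow F) (t : ℝ) : F t 0 0 = (0, 0) := by
  obtain ⟨K, hK⟩ := exists_lipschitzWith_g'
  obtain ⟨hq, hp⟩ := (hF.isNewtonSol 0 0).eq_of_eq_at (IsNewtonSol.const odd_g'.map_zero) hK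
    (s := 0) (by simp [hF.apply_zero]) (by simp [hF.apply_zero])
  exact Prod.ext (congrFun hq t) (congrFun hp t)

lemma position_ne_zero_of_sqrt_two_le (hF : IsHSFlow F) (hc : √2 ≤ c) (ht : t ≠ 0) :
    (F t 0 c).1 ≠ 0 := by
  obtain ⟨K, hK⟩ := exists_lipschitzWith_g'
  have hsq : 2 ≤ c ^ 2 := (Real.sqrt_le_iff.mp hc).2
  have hp : ∀ s, (F s 0 c).2 ≠ 0 := by
    refine (hF.isNewtonSol 0 c).momentum_ne_zero hK hasDerivAt_g (s := 0) ?_ fun x hx => ?_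
    · rw [hF.apply_zero]
      exact ((Real.sqrt_pos.mpr two_pos).trans_le hc).ne'
    · rw [hF.apply_zero, g_zero, add_zero] at hx
      exact g'_eq_zero_of_one_le_g (by linarith)
  have hq : (F 0 0 c).1 = 0 := by rw [hF.apply_zero]
  intro hqt
  exact ht ((hF.isNewtonSol 0 c).injective_position hp (hqt.trans hq.symm))

lemma add_le_position_of_momentum_two (hF : IsHSFlow F) (q₀ : ℝ) (ht : 0 ≤ t) :
    q₀ + t ≤ (F t q₀ 2).1 := by
  have hspeed : ∀ s, 1 ≤ (F s q₀ 2).2 := by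
    refine (hF.isNewtonSol q₀ 2).le_momentum hasDerivAt_g (s := 0) one_pos ?_ fun x => ?_
    · simp [hF.apply_zero]
    · simp only [hF.apply_zero]
      linarith [g_le_one x, g_nonneg q₀]
  have hmove := (hF.isNewtonSol q₀ 2).mul_sub_le_position_sub hspeed ht
  simp only [hF.apply_zero] at hmove
  linarith

lemma two_mul_le_period (hF : IsHSFlow F) (hT : IsPeriodMap F T) (hc : c ∈ Ioo 0 √2)
    (hnonneg : ∀ s ∈ Ioo 0 t, 0 ≤ (F s 0 c).1) : 2 * t ≤ T c := by
  obtain ⟨K, hK⟩ := exists_lipschitzWith_g'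
  exact (hF.isNewtonSol 0 c).two_mul_le_of_periodic_of_nonneg hK hasDerivAt_g odd_g'
    (by simp [hF.apply_zero]) (by simpa [hF.apply_zero] using hc.1.ne') (hT c hc).1
    (hT c hc).2.1 hnonneg

lemma momentum_half_period (hF : IsHSFlow F) (hT : IsPeriodMap F T) (hc : c ∈ Ioo 0 √2)
    (hTc : T c = 2 * t) : (F t 0 c).2 = -c := by
  obtain ⟨K, hK⟩ := exists_lipschitzWith_g'
  simpa [hF.apply_zero] using (hF.isNewtonSol 0 c).momentum_half_period hK hasDerivAt_g odd_g'
    (by simp [hF.apply_zero]) (hTc ▸ hT c hc)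

end IsHSFlow

namespace IsReturnMomentum

lemma lt_sqrt_two (h : IsReturnMomentum F t c) (hF : IsHSFlow F) (ht : t ≠ 0) : c < √2 := by
  by_contra! hc
  exact hF.position_ne_zero_of_sqrt_two_le hc ht h.1

lemma period_eq_two_mul (h : IsReturnMomentum F t c) (hF : IsHSFlow F) (hT : IsPeriodMap F T)
    (ht : 0 < t) (hc : 0 < c) : T c = 2 * t := by
  obtain ⟨K, hK⟩ := exists_lipschitzWith_g'
  exact (hF.isNewtonSol 0 c).period_eq_two_mul hK hasDerivAt_g odd_g'
    (by simp [hF.apply_zero]) (by simpa [hF.apply_zero] using hc.ne') ht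
    (hT c ⟨hc, h.lt_sqrt_two hF ht.ne'⟩) h.1 h.2

end IsReturnMomentum

end Flow

/-! ### The map `Δ` near `x = 0` -/

section DeltaMap

variable {F : ℝ → ℝ → ℝ → ℝ × ℝ} {Δ : ℝ → ℝ → ℝ × ℝ} {T : ℝ → ℝ} {t x : ℝ}

namespace IsDeltaMap

lemma fst_eq_zero_and_snd_mem (hΔ : IsDeltaMap F Δ) (hF : IsHSFlow F) (hx : x ∈ Ioo 0 t) :
    (Δ t x).1 = 0 ∧ (Δ t x).2 ∈ Ioc 0 2 := by
  have ht : 0 < t := hx.1.trans hx.2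
  obtain ⟨⟨hq₀, hp₀⟩ | hmem, hreach, -⟩ := hΔ t x ht hx.1
  · have hfar := hF.add_le_position_of_momentum_two (Δ t x).1 ht.le
    rw [← mem_singleton_iff.mp hp₀, hreach] at hfar
    linarith [hx.2, mem_Ici.mp hq₀]
  · exact hmem

lemma position_eq (hΔ : IsDeltaMap F Δ) (hF : IsHSFlow F) (hx : x ∈ Ioo 0 t) :
    (F t 0 (Δ t x).2).1 = x := by
  simpa only [(hΔ.fst_eq_zero_and_snd_mem hF hx).1] using
    (hΔ t x (hx.1.trans hx.2) hx.1).2.1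

lemma position_pos (hΔ : IsDeltaMap F Δ) (hF : IsHSFlow F) (hx : x ∈ Ioo 0 t) {s : ℝ}
    (hs : s ∈ Ioo 0 t) : 0 < (F s 0 (Δ t x).2).1 := by
  simpa only [(hΔ.fst_eq_zero_and_snd_mem hF hx).1] using
    (hΔ t x (hx.1.trans hx.2) hx.1).2.2 s hs

lemma usol_eq (hΔ : IsDeltaMap F Δ) (hF : IsHSFlow F) (hx : x ∈ Ioo 0 t) :
    usol F Δ t x = (F t 0 (Δ t x).2).2 := by
  rw [usol, if_pos hx.1, (hΔ.fst_eq_zero_and_snd_mem hF hx).1]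

lemma isReturnMomentum_of_mapClusterPt (hΔ : IsDeltaMap F Δ) (hF : IsHSFlow F) (ht : 0 < t)
    {c : ℝ} (hc : MapClusterPt c (𝓝[>] 0) fun x => (Δ t x).2) : IsReturnMomentum F t c := by
  obtain ⟨U, hU, hUc⟩ := mapClusterPt_iff_ultrafilter.mp hc
  have hsmall : ∀ᶠ x in U, x ∈ Ioo 0 t := hU (Ioo_mem_nhdsGT ht)
  have hlim (s : ℝ) : Tendsto (fun x => (F s 0 (Δ t x).2).1) U (𝓝 (F s 0 c).1) :=
    ((continuous_fst.comp (hF.continuous_apply_zero_left s)).tendsto c).comp hUc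
  constructor
  · have hzero : Tendsto (fun x : ℝ => x) U (𝓝 0) := hU.trans nhdsWithin_le_nhds
    refine tendsto_nhds_unique (hlim t) (hzero.congr' ?_)
    filter_upwards [hsmall] with x hx using (hΔ.position_eq hF hx).symm
  · intro s hs
    refine ge_of_tendsto (hlim s) ?_
    filter_upwards [hsmall] with x hx using (hΔ.position_pos hF hx hs).le

lemma tendsto_usol_nhdsGT (hΔ : IsDeltaMap F Δ) (hF : IsHSFlow F) (ht : 0 < t) {m c : ℝ}
    (hm : ∀ x ∈ Ioo 0 t, m ≤ (Δ t x).2)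
    (hunique : ∀ b, m ≤ b → IsReturnMomentum F t b → b = c) :
    Tendsto (fun x => usol F Δ t x) (𝓝[>] 0) (𝓝 (F t 0 c).2) := by
  have hsmall : ∀ᶠ x in 𝓝[>] (0 : ℝ), x ∈ Ioo 0 t := Ioo_mem_nhdsGT ht
  have hmomentum : Tendsto (fun x => (Δ t x).2) (𝓝[>] 0) (𝓝 c) := by
    refine (isCompact_Icc (a := m) (b := 2)).tendsto_nhds_of_unique_mapClusterPt ?_
      fun b hb hcluster => hunique b hb.1 (hΔ.isReturnMomentum_of_mapClusterPt hF ht hcluster)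
    filter_upwards [hsmall] with x hx
    exact ⟨hm x hx, (hΔ.fst_eq_zero_and_snd_mem hF hx).2.2⟩
  refine (((continuous_snd.comp (hF.continuous_apply_zero_left t)).tendsto c).comp
    hmomentum).congr' ?_
  filter_upwards [hsmall] with x hx using (hΔ.usol_eq hF hx).symm

lemma tendsto_usol_nhdsGT_of_two_mul_lt_period (hΔ : IsDeltaMap F Δ) (hF : IsHSFlow F)
    (hT : IsPeriodMap F T) (ht : 0 < t) (hlt : ∀ c ∈ Ioo 0 √2, 2 * t < T c) :
    Tendsto (fun x => usol F Δ t x) (𝓝[>] 0) (𝓝 0) := by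
  have hlim := hΔ.tendsto_usol_nhdsGT hF ht (m := 0) (c := 0)
    (fun x hx => (hΔ.fst_eq_zero_and_snd_mem hF hx).2.1.le) fun c hc hreturn => by
      by_contra hne
      have hpos : 0 < c := hc.lt_of_ne' hne
      exact (hlt c ⟨hpos, hreturn.lt_sqrt_two hF ht.ne'⟩).ne'
        (hreturn.period_eq_two_mul hF hT ht hpos)
  rwa [hF.apply_zero_zero] at hlim

lemma le_snd_of_period_eq (hΔ : IsDeltaMap F Δ) (hF : IsHSFlow F) (hT : IsPeriodMap F T)
    (hTmono : StrictMonoOn T (Ioo 0 √2)) {c : ℝ} (hc : c ∈ Ioo 0 √2) (hTc : T c = 2 * t)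
    (hx : x ∈ Ioo 0 t) : c ≤ (Δ t x).2 := by
  by_contra! hlt
  have hmem : (Δ t x).2 ∈ Ioo 0 √2 :=
    ⟨(hΔ.fst_eq_zero_and_snd_mem hF hx).2.1, hlt.trans hc.2⟩
  have hle : 2 * t ≤ T (Δ t x).2 :=
    hF.two_mul_le_period hT hmem fun s hs => (hΔ.position_pos hF hx hs).le
  exact (hTmono hmem hc hlt).not_ge (hTc ▸ hle)

lemma tendsto_usol_nhdsGT_of_period_eq (hΔ : IsDeltaMap F Δ) (hF : IsHSFlow F)
    (hT : IsPeriodMap F T) (hTmono : StrictMonoOn T (Ioo 0 √2)) {c : ℝ} (hc : c ∈ Ioo 0 √2)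
    (hTc : T c = 2 * t) : Tendsto (fun x => usol F Δ t x) (𝓝[>] 0) (𝓝 (-c)) := by
  have ht : 0 < t := by linarith [(hT c hc).1]
  rw [← hF.momentum_half_period hT hc hTc]
  refine hΔ.tendsto_usol_nhdsGT hF ht
    (fun x hx => hΔ.le_snd_of_period_eq hF hT hTmono hc hTc hx) fun b hb hreturn => ?_
  have hpos : 0 < b := hc.1.trans_le hb
  exact hTmono.injOn ⟨hpos, hreturn.lt_sqrt_two hF ht.ne'⟩ hc
    ((hreturn.period_eq_two_mul hF hT ht hpos).trans hTc.symm)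

end IsDeltaMap

lemma odd_usol (F : ℝ → ℝ → ℝ → ℝ × ℝ) (Δ : ℝ → ℝ → ℝ × ℝ) (t : ℝ) :
    Function.Odd (usol F Δ t) := by
  intro x
  rcases lt_trichotomy x 0 with hx | rfl | hx
  · simp [usol, hx, hx.not_gt]
  · simp [usol]
  · simp [usol, hx, hx.not_gt]

end DeltaMap

/-- Behavior of `u(t,·)` near `x = 0`: for `t < π/(2√2)` both one-sided limits at `0`
vanish; for `t > π/(2√2)` the right limit is `-𝒯⁻¹(2t) < 0` and the left limit is
`𝒯⁻¹(2t) > 0`, so `u(t,·)` has an entropic stationary shock at `0` whose size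
`2𝒯⁻¹(2t)` is increasing in `t`. -/
theorem stmt_19 (F : ℝ → ℝ → ℝ → ℝ × ℝ) (hF : IsHSFlow F)
    (Δ : ℝ → ℝ → ℝ × ℝ) (hΔ : IsDeltaMap F Δ)
    (T : ℝ → ℝ) (hT : IsPeriodMap F T)
    (hTmono : StrictMonoOn T (Ioo 0 (Real.sqrt 2)))
    (hTcont : ContinuousOn T (Ioo 0 (Real.sqrt 2)))
    (hTsurj : T '' Ioo (0:ℝ) (Real.sqrt 2) = Ioi (π / Real.sqrt 2))
    (Tinv : ℝ → ℝ)
    (hTinv : ∀ y ∈ Ioi (π / Real.sqrt 2),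
      Tinv y ∈ Ioo (0:ℝ) (Real.sqrt 2) ∧ T (Tinv y) = y) :
    (∀ t ∈ Ioo (0:ℝ) (π / (2 * Real.sqrt 2)),
      Tendsto (fun x => usol F Δ t x) (𝓝[>] 0) (𝓝 0) ∧
      Tendsto (fun x => usol F Δ t x) (𝓝[<] 0) (𝓝 0)) ∧
    (∀ t : ℝ, π / (2 * Real.sqrt 2) < t →
      Tendsto (fun x => usol F Δ t x) (𝓝[>] 0) (𝓝 (-(Tinv (2 * t)))) ∧
      Tendsto (fun x => usol F Δ t x) (𝓝[<] 0) (𝓝 (Tinv (2 * t))) ∧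
      0 < Tinv (2 * t)) ∧
    StrictMonoOn (fun t => 2 * Tinv (2 * t)) (Ioi (π / (2 * Real.sqrt 2))) := by
  have htwo : π / √2 = 2 * (π / (2 * √2)) := by field_simp
  have hdouble {t : ℝ} (ht : π / (2 * √2) < t) : 2 * t ∈ Ioi (π / √2) :=
    mem_Ioi.mpr (by linarith)
  refine ⟨fun t ht => ?_, fun t ht => ?_, ?_⟩
  · have hlt : ∀ c ∈ Ioo 0 √2, 2 * t < T c := fun c hc => by
      have hTc : T c ∈ Ioi (π / √2) := hTsurj ▸ mem_image_of_mem T hc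
      linarith [ht.2, mem_Ioi.mp hTc]
    have hright := hΔ.tendsto_usol_nhdsGT_of_two_mul_lt_period hF hT ht.1 hlt
    exact ⟨hright, by simpa using tendsto_nhdsLT_zero_of_odd (odd_usol F Δ t) hright⟩
  · obtain ⟨hmem, hTc⟩ := hTinv _ (hdouble ht)
    have hright := hΔ.tendsto_usol_nhdsGT_of_period_eq hF hT hTmono hmem hTc
    exact ⟨hright, by simpa using tendsto_nhdsLT_zero_of_odd (odd_usol F Δ t) hright, hmem.1⟩
  · have hTinvmono : StrictMonoOn Tinv (Ioi (π / √2)) :=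
      strictMonoOn_of_rightInvOn_of_mapsTo hTmono (fun y hy => (hTinv y hy).2)
        fun y hy => (hTinv y hy).1
    intro s hs t ht hst
    have hlt := hTinvmono (hdouble hs) (hdouble ht) (by linarith)
    simpa using hlt
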